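/- arXiv:1608.04114 — 2 statements merged into one kernel-verified Lean document; each statement's English description precedes it below -/
import Mathlib

section
/- Let α, β > -1 and r, s ∈ ℕ with s ≤ r. There is a constant c > 0, depending only on α, β, r, such that for every f ∈ C^{r-1}[-1,1] with f^{(r)} ∈ L^2(w_{α,β}) and every n ≥ r, for all 0 ≤ k ≤ s, ‖φ^k · (f^{(k)} - (S_n^{α,β} f)^{(k)})‖_{L^2(w_{α,β})} ≤ c · n^{-r+k} · E_{n-r}(f^{(r)})_{L^2(w_{α,β})}, where φ(x) = √(1-x²). -/
open MeasureTheory Set ENNReal NNReal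

noncomputable section

namespace JacobiApprox

/-- The Jacobi weight `w_{α,β}(x) = (1-x)^α (1+x)^β` on `(-1,1)`. -/
def w (α β x : ℝ) : ℝ := (1 - x) ^ α * (1 + x) ^ β

/-- The weighted `L^p` norm `‖f‖_{L^p(w_{α,β})}`; for `p = ∞` it is the uniform
norm on `[-1,1]`. -/
def LpW (α β : ℝ) (p : ℝ≥0∞) (f : ℝ → ℝ) : ℝ :=
  if p = ⊤ then sSup ((fun x => |f x|) '' Icc (-1 : ℝ) 1)
  else (∫ x in Ioo (-1 : ℝ) 1, |f x| ^ p.toReal * w α β x) ^ (1 / p.toReal)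

/-- Membership in `L^p(w_{α,β})` (`f ∈ C[-1,1]` when `p = ∞`). -/
def MemLpW (α β : ℝ) (p : ℝ≥0∞) (f : ℝ → ℝ) : Prop :=
  Measurable f ∧
    (p ≠ ⊤ → IntegrableOn (fun x => |f x| ^ p.toReal * w α β x) (Ioo (-1 : ℝ) 1)) ∧
    (p = ⊤ → ContinuousOn f (Icc (-1 : ℝ) 1))

/-- `E_n(f)_{L^p(w_{α,β})}`: the error of best approximation of `f` by polynomials
of degree at most `n` in `L^p(w_{α,β})`. -/
def E (α β : ℝ) (p : ℝ≥0∞) (n : ℕ) (f : ℝ → ℝ) : ℝ :=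
  sInf {r : ℝ | ∃ q : Polynomial ℝ, q.natDegree ≤ n ∧
    r = LpW α β p (fun x => f x - q.eval x)}

/-- Membership in the Sobolev space `W_p^s(w_{α,β})`: `f` has `s` continuous
derivatives and `f^{(s)} ∈ L^p(w_{α,β})` (for `p = ∞` this is `f ∈ C^s[-1,1]`). -/
def MemW (α β : ℝ) (p : ℝ≥0∞) (s : ℕ) (f : ℝ → ℝ) : Prop :=
  ContDiff ℝ (s : ℕ∞) f ∧
    (p ≠ ⊤ → IntegrableOn (fun x => |iteratedDeriv s f x| ^ p.toReal * w α β x)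
      (Ioo (-1 : ℝ) 1))

/-- The Sobolev norm `‖f‖_{W_p^s(w_{α,β})}` (max over derivatives when `p = ∞`). -/
def WNorm (α β : ℝ) (p : ℝ≥0∞) (s : ℕ) (f : ℝ → ℝ) : ℝ :=
  if p = ⊤ then
    (Finset.range (s + 1)).sup' (Finset.nonempty_range_iff.mpr (Nat.succ_ne_zero s))
      (fun k => LpW α β ⊤ (iteratedDeriv k f))
  else (∑ k ∈ Finset.range (s + 1), (LpW α β p (iteratedDeriv k f)) ^ p.toReal) ^
    (1 / p.toReal)

/-- Pochhammer symbol (rising factorial) `(a)_k`. -/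
def poch (a : ℝ) (k : ℕ) : ℝ := ∏ i ∈ Finset.range k, (a + i)

/-- The Jacobi polynomial `P_n^{(α,β)}`. -/
def JP (α β : ℝ) (n : ℕ) (t : ℝ) : ℝ :=
  (poch (α + 1) n / n.factorial) *
    ∑ k ∈ Finset.range (n + 1),
      poch (-(n : ℝ)) k * poch ((n : ℝ) + α + β + 1) k /
        (poch (α + 1) k * k.factorial) * ((1 - t) / 2) ^ k

/-- The renormalized Jacobi polynomial `J_n^{α,β} = 2^n/(n+α+β+1)_n · P_n^{(α,β)}`. -/
def J (α β : ℝ) (n : ℕ) (t : ℝ) : ℝ :=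
  2 ^ n / poch ((n : ℝ) + α + β + 1) n * JP α β n t

/-- The inner product `⟨f,g⟩_{α,β} = ∫_{-1}^1 f g w_{α,β}`. -/
def ip (α β : ℝ) (f g : ℝ → ℝ) : ℝ := ∫ x in Ioo (-1 : ℝ) 1, f x * g x * w α β x

/-- `h_n^{α,β} = ⟨J_n^{α,β}, J_n^{α,β}⟩_{α,β}`. -/
def hJ (α β : ℝ) (n : ℕ) : ℝ := ip α β (J α β n) (J α β n)

/-- The Fourier–Jacobi coefficient `\hat f_n^{α,β}`. -/
def coeff (α β : ℝ) (n : ℕ) (f : ℝ → ℝ) : ℝ := ip α β f (J α β n) / hJ α β n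

/-- The `n`-th partial sum `S_n^{α,β} f` of the Fourier–Jacobi series. -/
def S (α β : ℝ) (n : ℕ) (f : ℝ → ℝ) (x : ℝ) : ℝ :=
  ∑ k ∈ Finset.range (n + 1), coeff α β k f * J α β k x

/-- An admissible cut-off function: `C^∞`, `η ≡ 1` on `[0,1]`, `η ≡ 0` on `[2,∞)`. -/
def Admissible (η : ℝ → ℝ) : Prop :=
  ContDiff ℝ (⊤ : ℕ∞) η ∧ (∀ t : ℝ, 0 ≤ t → t ≤ 1 → η t = 1) ∧ ∀ t : ℝ, 2 ≤ t → η t = 0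

/-- The de la Vallée Poussin type operator `V_n^{α,β} f`. -/
def V (η : ℝ → ℝ) (α β : ℝ) (n : ℕ) (f : ℝ → ℝ) (x : ℝ) : ℝ :=
  ∑ k ∈ Finset.range (2 * n + 1), η ((k : ℝ) / (n : ℝ)) * coeff α β k f * J α β k x

/-- The Sobolev orthogonal polynomial `𝒥_{n,θ}^{α-s,β-s}`. -/
def SJ (α β : ℝ) (s : ℕ) (θ : ℝ) (n : ℕ) (x : ℝ) : ℝ :=
  if n < s then (x - θ) ^ n / n.factorial
  else ∫ t in θ..x, (x - t) ^ (s - 1) / (s - 1).factorial * J α β (n - s) t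

/-- The Sobolev inner product `⟨f,g⟩_{α,β}^{-s}`. -/
def ipS (α β : ℝ) (s : ℕ) (θ : ℝ) (lam : ℕ → ℝ) (f g : ℝ → ℝ) : ℝ :=
  ip α β (iteratedDeriv s f) (iteratedDeriv s g) +
    ∑ k ∈ Finset.range s, lam k * iteratedDeriv k f θ * iteratedDeriv k g θ

/-- The Fourier coefficient `\hat{𝔣}_n^{α-s,β-s}` in the Sobolev orthogonal system. -/
def coeffS (α β : ℝ) (s : ℕ) (θ : ℝ) (lam : ℕ → ℝ) (n : ℕ) (f : ℝ → ℝ) : ℝ :=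
  ipS α β s θ lam f (SJ α β s θ n) / ipS α β s θ lam (SJ α β s θ n) (SJ α β s θ n)

/-- The `n`-th partial sum `𝒮_{n,θ}^{α-s,β-s} f` of the Sobolev orthogonal expansion. -/
def SS (α β : ℝ) (s : ℕ) (θ : ℝ) (lam : ℕ → ℝ) (n : ℕ) (f : ℝ → ℝ) (x : ℝ) : ℝ :=
  ∑ k ∈ Finset.range (n + 1), coeffS α β s θ lam k f * SJ α β s θ k x

/-- The operator `𝒱_{n,θ}^{α-s,β-s} f`. -/
def VS (η : ℝ → ℝ) (α β : ℝ) (s : ℕ) (θ : ℝ) (n : ℕ) (f : ℝ → ℝ) (x : ℝ) : ℝ :=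
  (∑ k ∈ Finset.range s, iteratedDeriv k f θ * (x - θ) ^ k / k.factorial) +
    ∫ t in θ..x, (x - t) ^ (s - 1) / (s - 1).factorial *
      V η α β n (iteratedDeriv s f) t

/-- `A_j^{α,β} = (α+β+2)_{2j}/(α+1)_j`. -/
def Acoef (α β : ℝ) (j : ℕ) : ℝ := poch (α + β + 2) (2 * j) / poch (α + 1) j

/-- `B_n^{α,β} = (α+1)_{n+1}/(α+β+2)_{2n+1}`. -/
def Bcoef (α β : ℝ) (n : ℕ) : ℝ := poch (α + 1) (n + 1) / poch (α + β + 2) (2 * n + 1)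

/-- `D_j^{α,β} = (j+β+1)/((2j+α+β+2)(2j+α+β+3))`. -/
def Dcoef (α β : ℝ) (j : ℕ) : ℝ :=
  ((j : ℝ) + β + 1) / ((2 * (j : ℝ) + α + β + 2) * (2 * (j : ℝ) + α + β + 3))

/-- The function `u_{g,k}` of the Aubin–Nitsche duality argument. -/
def u (α β : ℝ) (s k : ℕ) (g : ℝ → ℝ) (x : ℝ) : ℝ :=
  ∫ t in (-1 : ℝ)..x, (x - t) ^ (s - 1) / (s - 1).factorial * (1 / w α β t) *
    ∫ y in t..(1 : ℝ), (y - t) ^ (s - k - 1) / (s - k - 1).factorial * g y * w α β y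

/-- The `s`-th derivative of `u_{g,k}`, given by its explicit formula. -/
def uDs (α β : ℝ) (s k : ℕ) (g : ℝ → ℝ) (x : ℝ) : ℝ :=
  (1 / w α β x) *
    ∫ y in x..(1 : ℝ), (y - x) ^ (s - k - 1) / (s - k - 1).factorial * g y * w α β y


/-! ### Weighted integrals of continuous functions -/

lemma w_nonneg (a b x : ℝ) (hx : x ∈ Ioo (-1 : ℝ) 1) : 0 ≤ w a b x := by
  unfold w
  exact mul_nonneg (Real.rpow_nonneg (by linarith [hx.2]) _) (Real.rpow_nonneg (by linarith [hx.1]) _)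

lemma w_pos (a b x : ℝ) (hx : x ∈ Ioo (-1 : ℝ) 1) : 0 < w a b x := by
  unfold w
  exact mul_pos (Real.rpow_pos_of_pos (by linarith [hx.2]) _) (Real.rpow_pos_of_pos (by linarith [hx.1]) _)

lemma w_intervalIntegrable {a b : ℝ} (ha : -1 < a) (hb : -1 < b) :
    IntervalIntegrable (w a b) volume (-1) 1 := by
  have h1 : IntervalIntegrable (fun x : ℝ => (1 - x) ^ a) volume 0 1 := by
    have := (intervalIntegral.intervalIntegrable_rpow' (a := 1) (b := 0) ha).comp_sub_left 1
    simpa using this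
  have h2 : IntervalIntegrable (fun x : ℝ => (1 + x) ^ b) volume (-1) 0 := by
    have := (intervalIntegral.intervalIntegrable_rpow' (a := 0) (b := 1) hb).comp_add_left 1
    simpa using this
  have h3 : IntervalIntegrable (w a b) volume 0 1 := by
    refine h1.mul_continuousOn ?_
    refine ContinuousOn.rpow_const (by fun_prop) ?_
    intro x hx
    rw [uIcc_of_le (by norm_num)] at hx
    left; linarith [hx.1]
  have h4 : IntervalIntegrable (w a b) volume (-1) 0 := by
    refine h2.continuousOn_mul ?_
    refine ContinuousOn.rpow_const (by fun_prop) ?_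
    intro x hx
    rw [uIcc_of_le (by norm_num)] at hx
    left; linarith [hx.2]
  exact h4.trans h3

/-- The weighted integral. -/
def wI (a b : ℝ) (g : ℝ → ℝ) : ℝ := ∫ x in Ioo (-1 : ℝ) 1, g x * w a b x

lemma mul_w_intervalIntegrable {a b : ℝ} (ha : -1 < a) (hb : -1 < b) {g : ℝ → ℝ}
    (hg : Continuous g) : IntervalIntegrable (fun x => g x * w a b x) volume (-1) 1 :=
  (w_intervalIntegrable ha hb).continuousOn_mul hg.continuousOn

lemma mul_w_integrableOn {a b : ℝ} (ha : -1 < a) (hb : -1 < b) {g : ℝ → ℝ}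
    (hg : Continuous g) : IntegrableOn (fun x => g x * w a b x) (Ioo (-1 : ℝ) 1) :=
  ((intervalIntegrable_iff_integrableOn_Ioo_of_le (by norm_num)).1
    (mul_w_intervalIntegrable ha hb hg))

lemma wI_eq_interval (a b : ℝ) (g : ℝ → ℝ) :
    wI a b g = ∫ x in (-1 : ℝ)..1, g x * w a b x := by
  rw [intervalIntegral.integral_of_le (by norm_num), integral_Ioc_eq_integral_Ioo]; rfl

lemma wI_add {a b : ℝ} (ha : -1 < a) (hb : -1 < b) {g h : ℝ → ℝ}
    (hg : Continuous g) (hh : Continuous h) :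
    wI a b (fun x => g x + h x) = wI a b g + wI a b h := by
  unfold wI
  rw [← integral_add (mul_w_integrableOn ha hb hg) (mul_w_integrableOn ha hb hh)]
  congr 1; ext x; ring

lemma wI_smul (a b c : ℝ) (g : ℝ → ℝ) :
    wI a b (fun x => c * g x) = c * wI a b g := by
  unfold wI
  rw [← integral_const_mul]
  congr 1; ext x; ring

lemma wI_sub {a b : ℝ} (ha : -1 < a) (hb : -1 < b) {g h : ℝ → ℝ}
    (hg : Continuous g) (hh : Continuous h) :
    wI a b (fun x => g x - h x) = wI a b g - wI a b h := by
  unfold wI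
  rw [← integral_sub (mul_w_integrableOn ha hb hg) (mul_w_integrableOn ha hb hh)]
  congr 1; ext x; ring

lemma wI_sum {a b : ℝ} (ha : -1 < a) (hb : -1 < b) (s : Finset ℕ) {g : ℕ → ℝ → ℝ}
    (hg : ∀ i, Continuous (g i)) :
    wI a b (fun x => ∑ i ∈ s, g i x) = ∑ i ∈ s, wI a b (g i) := by
  unfold wI
  rw [← integral_finsetSum _ (fun i _ => mul_w_integrableOn ha hb (hg i))]
  congr 1; ext x; rw [Finset.sum_mul]

lemma wI_mono {a b : ℝ} (ha : -1 < a) (hb : -1 < b) {g h : ℝ → ℝ}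
    (hg : Continuous g) (hh : Continuous h) (hle : ∀ x ∈ Ioo (-1 : ℝ) 1, g x ≤ h x) :
    wI a b g ≤ wI a b h :=
  setIntegral_mono_on (mul_w_integrableOn ha hb hg) (mul_w_integrableOn ha hb hh)
    measurableSet_Ioo (fun x hx => mul_le_mul_of_nonneg_right (hle x hx) (w_nonneg a b x hx))

lemma wI_nonneg (a b : ℝ) {g : ℝ → ℝ} (hg : ∀ x, 0 ≤ g x) : 0 ≤ wI a b g :=
  setIntegral_nonneg measurableSet_Ioo (fun x hx => mul_nonneg (hg x) (w_nonneg a b x hx))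

lemma w_shift (a b x : ℝ) (k : ℕ) (hx : x ∈ Ioo (-1 : ℝ) 1) :
    w (a + k) (b + k) x = (1 - x ^ 2) ^ k * w a b x := by
  unfold w
  rw [Real.rpow_add (by linarith [hx.2]), Real.rpow_add (by linarith [hx.1]),
    Real.rpow_natCast, Real.rpow_natCast, show 1 - x ^ 2 = (1 - x) * (1 + x) by ring, mul_pow]
  ring

lemma wI_shift (a b : ℝ) (k : ℕ) (g : ℝ → ℝ) :
    wI (a + k) (b + k) g = wI a b (fun x => (1 - x ^ 2) ^ k * g x) := by
  refine setIntegral_congr_fun measurableSet_Ioo (fun x hx => ?_)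
  simp only [w_shift a b x k hx]; ring

lemma wI_sq_poly_pos {a b : ℝ} (ha : -1 < a) (hb : -1 < b) (p : Polynomial ℝ) (hp : p ≠ 0) :
    0 < wI a b (fun x => p.eval x * p.eval x) := by
  refine lt_of_le_of_ne (wI_nonneg a b fun x => mul_self_nonneg _) (fun h => ?_)
  have hint := mul_w_integrableOn ha hb (g := fun x => p.eval x * p.eval x) (by fun_prop)
  have h0 := (setIntegral_eq_zero_iff_of_nonneg_ae ?_ hint).1 h.symm
  · have hz : ∀ᵐ x : ℝ, x ∉ {x | p.IsRoot x} :=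
      measure_eq_zero_iff_ae_notMem.1 ((p.finite_setOfPred_isRoot hp).measure_zero volume)
    have h1 : ∀ᵐ x ∂(volume.restrict (Ioo (-1 : ℝ) 1)), False := by
      filter_upwards [h0, ae_restrict_of_ae hz, ae_restrict_mem measurableSet_Ioo] with x h1 h2 h3
      have hw := w_pos a b x h3
      simp only [Pi.zero_apply, mul_eq_zero, hw.ne', or_false, or_self] at h1
      exact h2 h1
    rw [ae_iff] at h1
    simp at h1
    norm_num at h1
  · filter_upwards [ae_restrict_mem measurableSet_Ioo] with x h3
    exact mul_nonneg (mul_self_nonneg _) (w_nonneg a b x h3)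

/-! ### The Jacobi operator and integration by parts -/

open Polynomial in
/-- The Jacobi differential operator. -/
def Lop (a b : ℝ) (p : Polynomial ℝ) : Polynomial ℝ :=
  -((1 - X ^ 2) * derivative (derivative p)) + (C (a - b) + C (a + b + 2) * X) * derivative p

lemma ibp {a b : ℝ} (ha : -1 < a) (hb : -1 < b) {F F' : ℝ → ℝ}
    (hF : ∀ x, HasDerivAt F (F' x) x) (hF' : Continuous F') (q : Polynomial ℝ) :
    wI (a + 1) (b + 1) (fun x => F' x * q.derivative.eval x) =
      wI a b (fun x => F x * (Lop a b q).eval x) := by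
  have hFc : Continuous F := continuous_iff_continuousAt.2 fun x => (hF x).continuousAt
  have hwc : ContinuousOn (w (a + 1) (b + 1)) (uIcc (-1 : ℝ) 1) := by
    unfold w
    refine ContinuousOn.mul ?_ ?_
    · exact ContinuousOn.rpow_const (by fun_prop) (fun x _ => Or.inr (by linarith))
    · exact ContinuousOn.rpow_const (by fun_prop) (fun x _ => Or.inr (by linarith))
  have hv : ∀ x ∈ Ioo (min (-1 : ℝ) 1) (max (-1) 1), HasDerivAt
      (fun x => q.derivative.eval x * w (a + 1) (b + 1) x)
      (-((Lop a b q).eval x * w a b x)) x := by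
    intro x hx
    rw [min_eq_left (by norm_num), max_eq_right (by norm_num)] at hx
    have h1 : (0 : ℝ) < 1 - x := by linarith [hx.2]
    have h2 : (0 : ℝ) < 1 + x := by linarith [hx.1]
    have d1 : HasDerivAt (fun x : ℝ => (1 - x) ^ (a + 1)) _ x :=
      ((hasDerivAt_id x).const_sub 1).rpow_const (p := a + 1) (Or.inl h1.ne')
    have d2 : HasDerivAt (fun x : ℝ => (1 + x) ^ (b + 1)) _ x :=
      ((hasDerivAt_id x).const_add 1).rpow_const (p := b + 1) (Or.inl h2.ne')
    have d3 := (q.derivative.hasDerivAt x).mul (d1.mul d2)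
    refine d3.congr_deriv ?_
    simp only [Lop, w, Pi.mul_apply, id, add_sub_cancel_right]
    rw [Real.rpow_add h1, Real.rpow_add h2]
    simp
    ring
  have hu : ∀ x ∈ Ioo (min (-1 : ℝ) 1) (max (-1) 1), HasDerivAt F (F' x) x := fun x _ => hF x
  have key := intervalIntegral.integral_mul_deriv_eq_deriv_mul_of_hasDerivAt
    (u := F) (v := fun x => q.derivative.eval x * w (a + 1) (b + 1) x)
    hFc.continuousOn ((q.derivative.continuous.continuousOn).mul hwc) hu hv
    (hF'.intervalIntegrable _ _)
    (mul_w_intervalIntegrable ha hb (g := fun x => (Lop a b q).eval x) (by fun_prop)).neg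
  have e1 : w (a + 1) (b + 1) 1 = 0 := by
    unfold w; rw [sub_self, Real.zero_rpow (by linarith), zero_mul]
  have e2 : w (a + 1) (b + 1) (-1) = 0 := by
    unfold w; rw [show (1 : ℝ) + -1 = 0 by norm_num, Real.zero_rpow (by linarith), mul_zero]
  simp only [e1, e2, mul_zero, sub_zero, zero_sub, mul_neg, intervalIntegral.integral_neg,
    neg_inj] at key
  rw [wI_eq_interval, wI_eq_interval]
  simp only [mul_assoc]
  exact key.symm

/-! ### Jacobi polynomials as polynomials -/

lemma poch_succ (a : ℝ) (k : ℕ) : poch a (k + 1) = poch a k * (a + k) := by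
  simp [poch, Finset.prod_range_succ]

lemma poch_ne_zero (a : ℝ) (k : ℕ) (h : ∀ i < k, a + i ≠ 0) : poch a k ≠ 0 := by
  unfold poch
  exact Finset.prod_ne_zero_iff.2 fun i hi => h i (Finset.mem_range.1 hi)

/-- Coefficients of the hypergeometric polynomial. -/
def hc (a b : ℝ) (n k : ℕ) : ℝ :=
  poch (-(n : ℝ)) k * poch ((n : ℝ) + a + b + 1) k / (poch (a + 1) k * k.factorial)

lemma hc_succ {a b : ℝ} (ha : -1 < a) (n k : ℕ) :
    hc a b n (k + 1) * ((k + 1) * (k + (a + 1))) =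
      (k - n) * (k + (n + a + b + 1)) * hc a b n k := by
  have h1 : poch (a + 1) k ≠ 0 := poch_ne_zero _ _ fun i _ => by
    have : (0 : ℝ) ≤ i := Nat.cast_nonneg i
    linarith
  have h2 : (k.factorial : ℝ) ≠ 0 := by positivity
  have h3 : (a + 1 + k : ℝ) ≠ 0 := by
    have : (0 : ℝ) ≤ k := Nat.cast_nonneg k
    linarith
  have h4 : ((k : ℝ) + 1) ≠ 0 := by positivity
  unfold hc
  rw [poch_succ, poch_succ, poch_succ, Nat.factorial_succ]
  push_cast
  field_simp
  ring

lemma hc_zero_of_gt (a b : ℝ) (n k : ℕ) (h : n < k) : hc a b n k = 0 := by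
  have : poch (-(n : ℝ)) k = 0 := by
    unfold poch
    exact Finset.prod_eq_zero (Finset.mem_range.2 h) (by simp)
  simp [hc, this]

lemma hc_top_ne_zero {a b : ℝ} (ha : -1 < a) (hb : -1 < b) (n : ℕ) : hc a b n n ≠ 0 := by
  unfold hc
  refine div_ne_zero (mul_ne_zero ?_ ?_) (mul_ne_zero ?_ (by positivity))
  · refine poch_ne_zero _ _ fun i hi => ?_
    have : (i : ℝ) < n := by exact_mod_cast hi
    linarith
  · refine poch_ne_zero _ _ fun i hi => ?_
    have : (1 : ℝ) ≤ n := by exact_mod_cast (by omega : 1 ≤ n)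
    have : (0 : ℝ) ≤ i := Nat.cast_nonneg i
    linarith
  · refine poch_ne_zero _ _ fun i hi => ?_
    have : (0 : ℝ) ≤ i := Nat.cast_nonneg i
    linarith

/-- The hypergeometric polynomial. -/
def hQ (a b : ℝ) (n : ℕ) : Polynomial ℝ :=
  ∑ k ∈ Finset.range (n + 1), Polynomial.monomial k (hc a b n k)

lemma hQ_coeff (a b : ℝ) (n k : ℕ) : (hQ a b n).coeff k = hc a b n k := by
  unfold hQ
  rw [Polynomial.finsetSum_coeff]
  simp only [Polynomial.coeff_monomial]
  rw [Finset.sum_ite_eq' (Finset.range (n + 1))]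
  split_ifs with h
  · rfl
  · rw [hc_zero_of_gt]
    simpa using h

lemma hQ_natDegree {a b : ℝ} (ha : -1 < a) (hb : -1 < b) (n : ℕ) : (hQ a b n).natDegree = n := by
  refine Polynomial.natDegree_eq_of_le_of_coeff_ne_zero ?_ ?_
  · rw [Polynomial.natDegree_le_iff_coeff_eq_zero]
    intro k hk
    rw [hQ_coeff, hc_zero_of_gt _ _ _ _ hk]
  · rw [hQ_coeff]; exact hc_top_ne_zero ha hb n

open Polynomial in
lemma hQ_ode {a b : ℝ} (ha : -1 < a) (n : ℕ) :
    (X - X ^ 2) * derivative (derivative (hQ a b n)) +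
      (C (a + 1) - C (a + b + 2) * X) * derivative (hQ a b n) +
      C ((n : ℝ) * (n + a + b + 1)) * hQ a b n = 0 := by
  ext k
  have key := hc_succ (b := b) ha n k
  rw [show (X - X ^ 2) * derivative (derivative (hQ a b n)) +
      (C (a + 1) - C (a + b + 2) * X) * derivative (hQ a b n) +
      C ((n : ℝ) * (n + a + b + 1)) * hQ a b n =
      X * derivative (derivative (hQ a b n)) - X * (X * derivative (derivative (hQ a b n)))
      + C (a + 1) * derivative (hQ a b n) - C (a + b + 2) * (X * derivative (hQ a b n))
      + C ((n : ℝ) * (n + a + b + 1)) * hQ a b n by ring]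
  rcases k with _ | _ | k
  · simp only [coeff_add, coeff_sub, coeff_C_mul, coeff_X_mul_zero, coeff_derivative, hQ_coeff,
      coeff_zero] at key ⊢
    push_cast at key ⊢
    linarith
  · simp only [coeff_add, coeff_sub, coeff_C_mul, coeff_X_mul, coeff_X_mul_zero, coeff_derivative,
      hQ_coeff, coeff_zero] at key ⊢
    push_cast at key ⊢
    linarith
  · simp only [coeff_add, coeff_sub, coeff_C_mul, coeff_X_mul, coeff_derivative,
      hQ_coeff, coeff_zero] at key ⊢
    push_cast at key ⊢
    linarith

/-- The normalizing constant. -/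
def nc (a b : ℝ) (n : ℕ) : ℝ :=
  2 ^ n / poch ((n : ℝ) + a + b + 1) n * (poch (a + 1) n / n.factorial)

lemma nc_ne_zero {a b : ℝ} (ha : -1 < a) (hb : -1 < b) (n : ℕ) : nc a b n ≠ 0 := by
  unfold nc
  refine mul_ne_zero (div_ne_zero (by positivity) ?_) (div_ne_zero ?_ (by positivity))
  · refine poch_ne_zero _ _ fun i hi => ?_
    have : (1 : ℝ) ≤ n := by exact_mod_cast (by omega : 1 ≤ n)
    have : (0 : ℝ) ≤ i := Nat.cast_nonneg i
    linarith
  · refine poch_ne_zero _ _ fun i hi => ?_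
    have : (0 : ℝ) ≤ i := Nat.cast_nonneg i
    linarith

open Polynomial in
/-- The polynomial `(1 - X)/2`. -/
def uu : Polynomial ℝ := C (1 / 2) - C (1 / 2) * X

open Polynomial in
lemma uu_natDegree : uu.natDegree = 1 := by
  unfold uu
  compute_degree!

open Polynomial in
/-- The Jacobi polynomial `J` as a polynomial. -/
def Jp (a b : ℝ) (n : ℕ) : Polynomial ℝ := C (nc a b n) * (hQ a b n).comp uu

lemma Jp_eval (a b : ℝ) (n : ℕ) (x : ℝ) : (Jp a b n).eval x = J a b n x := by
  simp only [Jp, J, JP, hQ, uu, nc, hc, Polynomial.eval_mul, Polynomial.eval_C,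
    Polynomial.eval_comp, Polynomial.eval_finsetSum, Polynomial.eval_monomial,
    Polynomial.eval_sub, Polynomial.eval_X]
  rw [show (1 / 2 - 1 / 2 * x : ℝ) = (1 - x) / 2 by ring]
  ring

lemma Jp_natDegree {a b : ℝ} (ha : -1 < a) (hb : -1 < b) (n : ℕ) : (Jp a b n).natDegree = n := by
  unfold Jp
  rw [Polynomial.natDegree_C_mul (nc_ne_zero ha hb n), Polynomial.natDegree_comp,
    hQ_natDegree ha hb, uu_natDegree, mul_one]

lemma Jp_ne_zero {a b : ℝ} (ha : -1 < a) (hb : -1 < b) (n : ℕ) : Jp a b n ≠ 0 := by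
  unfold Jp
  refine mul_ne_zero (Polynomial.C_ne_zero.2 (nc_ne_zero ha hb n)) ?_
  intro h
  rw [Polynomial.comp_eq_zero_iff] at h
  rcases h with h | h
  · have := hQ_coeff a b n n
    rw [h] at this
    exact hc_top_ne_zero ha hb n (by simpa using this.symm)
  · have h2 := uu_natDegree
    rw [h.2, Polynomial.natDegree_C] at h2
    exact zero_ne_one h2

/-- The eigenvalue. -/
def lam (a b : ℝ) (n : ℕ) : ℝ := (n : ℝ) * (n + a + b + 1)

open Polynomial in
lemma Lop_Jp {a b : ℝ} (ha : -1 < a) (n : ℕ) :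
    Lop a b (Jp a b n) = C (lam a b n) * Jp a b n := by
  have h := congrArg (fun p => p.comp uu) (hQ_ode (b := b) ha n)
  simp only [add_comp, mul_comp, sub_comp, X_comp, pow_comp, C_comp, zero_comp] at h
  have hd : derivative uu = -C (1 / 2) := by simp [uu]
  have hX : (X : Polynomial ℝ) = 1 - C 2 * uu := by
    unfold uu
    rw [mul_sub, ← mul_assoc, ← C_mul]
    norm_num
  have d1 : derivative (Jp a b n) =
      -(C (1 / 2) * C (nc a b n) * (derivative (hQ a b n)).comp uu) := by
    simp only [Jp, derivative_mul, derivative_C, derivative_comp, hd]; ring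
  have d2 : derivative (derivative (Jp a b n)) =
      C (1 / 2) * C (1 / 2) * C (nc a b n) * (derivative (derivative (hQ a b n))).comp uu := by
    rw [d1]
    simp only [derivative_neg, derivative_mul, derivative_C, derivative_comp, hd]; ring
  unfold Lop lam
  rw [d2, d1, hX]
  unfold Jp
  have hc2 : (C (1 / 2) : Polynomial ℝ) * C 2 = 1 := by rw [← C_mul]; norm_num
  have hc2' : (C 2 : Polynomial ℝ) = 2 := rfl
  simp only [C_add, C_sub, C_mul, C_1, hc2'] at h hc2 ⊢
  generalize (C (1 / 2) : Polynomial ℝ) = z at *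
  generalize (derivative (derivative (hQ a b n))).comp uu = q2 at *
  generalize (derivative (hQ a b n)).comp uu = q1 at *
  generalize (hQ a b n).comp uu = q0 at *
  generalize C (nc a b n) = c at *
  generalize uu = v at *
  linear_combination (-c) * h + c * (-(v - v^2) * q2 * (2 * z + 1) -
    (1 * (C a + 1) - (C a + C b + 2) * v) * q1) * hc2

lemma Lop_natDegree (a b : ℝ) (p : Polynomial ℝ) : (Lop a b p).natDegree ≤ p.natDegree := by
  unfold Lop
  by_cases h0 : p.natDegree = 0
  · rw [Polynomial.eq_C_of_natDegree_eq_zero h0]; simp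
  have h1 := Polynomial.natDegree_derivative_le p
  refine Polynomial.natDegree_add_le_of_degree_le ?_ ?_
  · rw [Polynomial.natDegree_neg]
    by_cases h2 : p.derivative.natDegree = 0
    · rw [Polynomial.eq_C_of_natDegree_eq_zero h2]; simp
    have h3 := Polynomial.natDegree_derivative_le p.derivative
    refine Polynomial.natDegree_mul_le.trans ?_
    have : (1 - Polynomial.X ^ 2 : Polynomial ℝ).natDegree ≤ 2 := by compute_degree
    omega
  · refine Polynomial.natDegree_mul_le.trans ?_
    have : (Polynomial.C (a - b) + Polynomial.C (a + b + 2) * Polynomial.X : Polynomial ℝ).natDegree ≤ 1 := by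
      compute_degree
    omega

/-! ### Orthogonality and projections -/

lemma lam_nonneg {a b : ℝ} (ha : -1 < a) (hb : -1 < b) (n : ℕ) : 0 ≤ lam a b n := by
  unfold lam
  rcases Nat.eq_zero_or_pos n with h | h
  · simp [h]
  · have : (1 : ℝ) ≤ n := by exact_mod_cast h
    exact mul_nonneg (by linarith) (by linarith)

lemma lam_mono {a b : ℝ} (ha : -1 < a) (hb : -1 < b) : StrictMono (lam a b) := by
  refine strictMono_nat_of_lt_succ fun n => ?_
  unfold lam
  have : (0 : ℝ) ≤ n := Nat.cast_nonneg n
  push_cast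
  nlinarith

lemma ibp_poly {a b : ℝ} (ha : -1 < a) (hb : -1 < b) (p q : Polynomial ℝ) :
    wI (a + 1) (b + 1) (fun x => p.derivative.eval x * q.derivative.eval x) =
      wI a b (fun x => p.eval x * (Lop a b q).eval x) :=
  ibp ha hb (fun x => p.hasDerivAt x) (by fun_prop) q

lemma Jp_orth {a b : ℝ} (ha : -1 < a) (hb : -1 < b) {m n : ℕ} (h : m ≠ n) :
    wI a b (fun x => (Jp a b m).eval x * (Jp a b n).eval x) = 0 := by
  have h1 := ibp_poly ha hb (Jp a b m) (Jp a b n)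
  have h2 := ibp_poly ha hb (Jp a b n) (Jp a b m)
  rw [Lop_Jp ha] at h1 h2
  have e1 : wI a b (fun x => (Jp a b m).eval x * (Polynomial.C (lam a b n) * Jp a b n).eval x) =
      lam a b n * wI a b (fun x => (Jp a b m).eval x * (Jp a b n).eval x) := by
    rw [← wI_smul]; congr 1; ext x; simp; ring
  have e2 : wI a b (fun x => (Jp a b n).eval x * (Polynomial.C (lam a b m) * Jp a b m).eval x) =
      lam a b m * wI a b (fun x => (Jp a b m).eval x * (Jp a b n).eval x) := by
    rw [← wI_smul]; congr 1; ext x; simp; ring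
  have e3 : wI (a + 1) (b + 1) (fun x => (Jp a b m).derivative.eval x * (Jp a b n).derivative.eval x)
     = wI (a + 1) (b + 1)
      (fun x => (Jp a b n).derivative.eval x * (Jp a b m).derivative.eval x) := by
    congr 1; ext x; ring
  have h3 : lam a b n * wI a b (fun x => (Jp a b m).eval x * (Jp a b n).eval x) =
      lam a b m * wI a b (fun x => (Jp a b m).eval x * (Jp a b n).eval x) := by
    rw [← e1, ← e2, ← h1, ← h2, e3]
  have h4 : lam a b n ≠ lam a b m := fun hh => h ((lam_mono ha hb).injective hh).symm
  by_contra h5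
  exact h4 (mul_right_cancel₀ h5 h3)

/-- `F` is orthogonal to all polynomials of degree at most `m`. -/
def Perp (a b : ℝ) (m : ℕ) (F : ℝ → ℝ) : Prop :=
  ∀ q : Polynomial ℝ, q.natDegree ≤ m → wI a b (fun x => F x * q.eval x) = 0

lemma perp_of_Jp {a b : ℝ} (ha : -1 < a) (hb : -1 < b) {F : ℝ → ℝ} (hF : Continuous F) (m : ℕ)
    (h : ∀ j ≤ m, wI a b (fun x => F x * (Jp a b j).eval x) = 0) : Perp a b m F := by
  have key : ∀ k, k ≤ m + 1 → ∀ q : Polynomial ℝ, q.degree < (k : ℕ) →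
      wI a b (fun x => F x * q.eval x) = 0 := by
    intro k
    induction k with
    | zero =>
      intro _ q hq
      have : q = 0 := by
        rw [← Polynomial.degree_eq_bot]
        simpa using hq
      simp [this, wI]
    | succ k ih =>
      intro hk q hq
      have hlc : (Jp a b k).coeff k ≠ 0 := by
        have := Polynomial.leadingCoeff_ne_zero.2 (Jp_ne_zero ha hb k)
        rwa [Polynomial.leadingCoeff, Jp_natDegree ha hb] at this
      set c := q.coeff k / (Jp a b k).coeff k with hcdef
      have hd : (q - Polynomial.C c * Jp a b k).degree < (k : ℕ) := by
        rw [Polynomial.degree_lt_iff_coeff_zero]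
        intro i hi
        rcases hi.eq_or_lt with rfl | hi
        · simp [hcdef, hlc]
        · have h1 : q.coeff i = 0 :=
            (Polynomial.degree_lt_iff_coeff_zero _ _).1 hq i hi
          have h2 : (Jp a b k).coeff i = 0 :=
            Polynomial.coeff_eq_zero_of_natDegree_lt (by rw [Jp_natDegree ha hb]; exact hi)
          simp [h1, h2]
      have h0 := ih (by omega) _ hd
      have e : (fun x => F x * q.eval x) = fun x =>
          F x * (q - Polynomial.C c * Jp a b k).eval x + c * (F x * (Jp a b k).eval x) := by
        ext x; simp; ring
      rw [e, wI_add ha hb (by fun_prop) (by fun_prop), h0, wI_smul, h k (by omega)]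
      simp
  intro q hq
  refine key (m + 1) le_rfl q ?_
  refine lt_of_le_of_lt Polynomial.degree_le_natDegree ?_
  exact_mod_cast Nat.lt_succ_of_le hq

/-- The partial sum as a polynomial. -/
def Sp (a b : ℝ) (n : ℕ) (f : ℝ → ℝ) : Polynomial ℝ :=
  ∑ k ∈ Finset.range (n + 1), Polynomial.C (coeff a b k f) * Jp a b k

lemma Sp_eval (a b : ℝ) (n : ℕ) (f : ℝ → ℝ) (x : ℝ) : (Sp a b n f).eval x = S a b n f x := by
  simp [Sp, S, Polynomial.eval_finsetSum, Jp_eval]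

lemma Sp_natDegree {a b : ℝ} (ha : -1 < a) (hb : -1 < b) (n : ℕ) (f : ℝ → ℝ) :
    (Sp a b n f).natDegree ≤ n := by
  unfold Sp
  refine Polynomial.natDegree_sum_le_of_forall_le _ _ fun k hk => ?_
  refine (Polynomial.natDegree_C_mul_le _ _).trans ?_
  rw [Jp_natDegree ha hb]
  have := Finset.mem_range.1 hk
  omega

lemma hJ_eq (a b : ℝ) (n : ℕ) :
    hJ a b n = wI a b (fun x => (Jp a b n).eval x * (Jp a b n).eval x) := by
  simp only [hJ, ip, wI, Jp_eval]

lemma hJ_pos {a b : ℝ} (ha : -1 < a) (hb : -1 < b) (n : ℕ) : 0 < hJ a b n := by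
  rw [hJ_eq]
  exact wI_sq_poly_pos ha hb _ (Jp_ne_zero ha hb n)

lemma wI_mul_sum {a b : ℝ} (ha : -1 < a) (hb : -1 < b) {F : ℝ → ℝ} (hF : Continuous F)
    (n : ℕ) (c : ℕ → ℝ) :
    wI a b (fun x => F x *
      (∑ k ∈ Finset.range (n + 1), Polynomial.C (c k) * Jp a b k).eval x) =
      ∑ k ∈ Finset.range (n + 1), c k * wI a b (fun x => F x * (Jp a b k).eval x) := by
  have : (fun x => F x * (∑ k ∈ Finset.range (n + 1), Polynomial.C (c k) * Jp a b k).eval x) =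
      fun x => ∑ k ∈ Finset.range (n + 1), c k * (F x * (Jp a b k).eval x) := by
    ext x
    simp only [Polynomial.eval_finsetSum, Finset.mul_sum, Polynomial.eval_mul, Polynomial.eval_C]
    exact Finset.sum_congr rfl fun k _ => by ring
  rw [this, wI_sum ha hb _ (fun i => by fun_prop)]
  exact Finset.sum_congr rfl fun k _ => wI_smul _ _ _ _

lemma coeff_mul_hJ {a b : ℝ} (ha : -1 < a) (hb : -1 < b) (f : ℝ → ℝ) (n : ℕ) :
    wI a b (fun x => f x * (Jp a b n).eval x) = coeff a b n f * hJ a b n := by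
  unfold coeff
  rw [div_mul_cancel₀ _ (hJ_pos ha hb n).ne']
  simp only [ip, wI, Jp_eval]

lemma wI_Sp_mul_Jp {a b : ℝ} (ha : -1 < a) (hb : -1 < b) (f : ℝ → ℝ) (n j : ℕ) (hj : j ≤ n) :
    wI a b (fun x => (Sp a b n f).eval x * (Jp a b j).eval x) = coeff a b j f * hJ a b j := by
  have e : (fun x => (Sp a b n f).eval x * (Jp a b j).eval x) =
    fun x => (Jp a b j).eval x * (Sp a b n f).eval x := by ext x; ring
  rw [e]
  unfold Sp
  rw [wI_mul_sum ha hb (by fun_prop), Finset.sum_eq_single j]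
  · rw [hJ_eq]
  · intro k _ hk
    rw [Jp_orth ha hb (Ne.symm hk), mul_zero]
  · intro h
    exact absurd (Finset.mem_range.2 (by omega)) h

lemma perp_Sp {a b : ℝ} (ha : -1 < a) (hb : -1 < b) {f : ℝ → ℝ} (hf : Continuous f) (n : ℕ) :
    Perp a b n (fun x => f x - (Sp a b n f).eval x) := by
  refine perp_of_Jp ha hb (by fun_prop) n fun j hj => ?_
  have e : (fun x => (f x - (Sp a b n f).eval x) * (Jp a b j).eval x) =
    fun x => f x * (Jp a b j).eval x - (Sp a b n f).eval x * (Jp a b j).eval x := by ext x; ring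
  rw [e, wI_sub ha hb (by fun_prop) (by fun_prop), coeff_mul_hJ ha hb, wI_Sp_mul_Jp ha hb f n j hj,
    sub_self]

/-- Minimality of an orthogonal remainder. -/
lemma perp_min {a b : ℝ} (ha : -1 < a) (hb : -1 < b) {F : ℝ → ℝ} (hF : Continuous F) {m : ℕ}
    (h : Perp a b m F) (q : Polynomial ℝ) (hq : q.natDegree ≤ m) :
    wI a b (fun x => (F x + q.eval x) ^ 2) =
      wI a b (fun x => F x ^ 2) + wI a b (fun x => q.eval x ^ 2) := by
  have e : (fun x => (F x + q.eval x) ^ 2) =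
    fun x => (F x ^ 2 + q.eval x ^ 2) + 2 * (F x * q.eval x) := by ext x; ring
  rw [e, wI_add ha hb (by fun_prop) (by fun_prop), wI_add ha hb (by fun_prop) (by fun_prop),
    wI_smul, h q hq]
  ring

lemma exists_approx {a b : ℝ} (ha : -1 < a) (hb : -1 < b) {F : ℝ → ℝ} (hF : Continuous F)
    {ε : ℝ} (hε : 0 < ε) : ∃ q : Polynomial ℝ, wI a b (fun x => (F x - q.eval x) ^ 2) ≤ ε := by
  have hW : 0 ≤ wI a b (fun _ => (1 : ℝ)) := wI_nonneg _ _ fun _ => zero_le_one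
  set W := wI a b (fun _ => (1 : ℝ)) with hWdef
  set δ := Real.sqrt (ε / (W + 1)) with hδ
  have hδ0 : 0 < δ := Real.sqrt_pos.2 (by positivity)
  obtain ⟨q, hq⟩ := exists_polynomial_near_of_continuousOn (-1) 1 F hF.continuousOn δ hδ0
  refine ⟨q, ?_⟩
  have h1 : wI a b (fun x => (F x - q.eval x) ^ 2) ≤ wI a b (fun _ => δ ^ 2 * 1) := by
    refine wI_mono ha hb (by fun_prop) (by fun_prop) fun x hx => ?_
    have := hq x (Ioo_subset_Icc_self hx)
    rw [mul_one, sq_le_sq, abs_of_pos hδ0, abs_sub_comm]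
    exact this.le
  rw [wI_smul, ← hWdef, hδ, Real.sq_sqrt (by positivity)] at h1
  refine h1.trans ?_
  rw [div_mul_eq_mul_div, div_le_iff₀ (by positivity)]
  nlinarith

/-- The weighted Poincare inequality for functions orthogonal to polynomials. -/
lemma poincare {a b : ℝ} (ha : -1 < a) (hb : -1 < b) {F F' : ℝ → ℝ}
    (hF : ∀ x, HasDerivAt F (F' x) x) (hF' : Continuous F') {m : ℕ} (h : Perp a b m F) :
    lam a b (m + 1) * wI a b (fun x => F x ^ 2) ≤
      wI (a + 1) (b + 1) (fun x => F' x ^ 2) := by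
  have ha1 : -1 < a + 1 := by linarith
  have hb1 : -1 < b + 1 := by linarith
  have hFc : Continuous F := continuous_iff_continuousAt.2 fun x => (hF x).continuousAt
  have hl : 0 ≤ lam a b (m + 1) := lam_nonneg ha hb _
  refine le_of_forall_pos_le_add fun ε hε => ?_
  obtain ⟨q, hq⟩ := exists_approx ha hb hFc (ε := ε / (lam a b (m + 1) + 1)) (by positivity)
  set N := q.natDegree
  set P := Sp a b N F with hP
  have hperp : Perp a b N (fun x => F x - P.eval x) := perp_Sp ha hb hFc N
  -- Pythagoras
  have h1 := perp_min ha hb (by fun_prop) hperp (P - q)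
    ((Polynomial.natDegree_sub_le _ _).trans (max_le (Sp_natDegree ha hb _ _) le_rfl))
  have h2 := perp_min ha hb (by fun_prop) hperp P (Sp_natDegree ha hb _ _)
  have e1 : (fun x => (F x - P.eval x + (P - q).eval x) ^ 2) = fun x => (F x - q.eval x) ^ 2 := by
    ext x; simp
  have e2 : (fun x => (F x - P.eval x + P.eval x) ^ 2) = fun x => F x ^ 2 := by
    ext x; simp
  rw [e1] at h1
  rw [e2] at h2
  have h3 : 0 ≤ wI a b (fun x => (P - q).eval x ^ 2) := wI_nonneg _ _ fun x => sq_nonneg _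
  -- spectral part
  set c := fun k => coeff a b k F with hc
  have hLP : Lop a b P = ∑ k ∈ Finset.range (N + 1),
      Polynomial.C (lam a b k * c k) * Jp a b k := by
    have hLsum : ∀ s : Finset ℕ, Lop a b (∑ k ∈ s, Polynomial.C (c k) * Jp a b k) =
        ∑ k ∈ s, Polynomial.C (lam a b k * c k) * Jp a b k := by
      intro s
      induction s using Finset.induction_on with
      | empty => simp [Lop]
      | insert i s hi ih =>
        rw [Finset.sum_insert hi, Finset.sum_insert hi, ← ih]
        have := Lop_Jp (b := b) ha i
        rw [Polynomial.C_mul]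
        unfold Lop at this ⊢
        simp only [Polynomial.derivative_add, Polynomial.derivative_C_mul]
        linear_combination Polynomial.C (c i) * this
    exact hLsum _
  have hFP := ibp ha hb hF hF' P
  have hPP := ibp_poly ha hb P P
  rw [hLP, wI_mul_sum ha hb hFc] at hFP
  rw [hLP, wI_mul_sum ha hb (by fun_prop)] at hPP
  have hP2 : wI a b (fun x => P.eval x ^ 2) =
      ∑ k ∈ Finset.range (N + 1), c k * (c k * hJ a b k) := by
    have e : (fun x => P.eval x ^ 2) = fun x => P.eval x * P.eval x := by ext x; ring
    rw [e]
    conv_lhs => enter [3, x, 2]; rw [hP, Sp]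
    rw [wI_mul_sum ha hb (by fun_prop)]
    refine Finset.sum_congr rfl fun k hk => ?_
    rw [wI_Sp_mul_Jp ha hb F N k (by have := Finset.mem_range.1 hk; omega)]
  have hFP' : wI (a + 1) (b + 1) (fun x => F' x * P.derivative.eval x) =
      ∑ k ∈ Finset.range (N + 1), lam a b k * c k * (c k * hJ a b k) := by
    rw [hFP]
    exact Finset.sum_congr rfl fun k hk => by rw [coeff_mul_hJ ha hb]
  have hPP' : wI (a + 1) (b + 1) (fun x => P.derivative.eval x * P.derivative.eval x) =
      ∑ k ∈ Finset.range (N + 1), lam a b k * c k * (c k * hJ a b k) := by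
    rw [hPP]
    refine Finset.sum_congr rfl fun k hk => ?_
    rw [wI_Sp_mul_Jp ha hb F N k (by have := Finset.mem_range.1 hk; omega)]
  set T := ∑ k ∈ Finset.range (N + 1), lam a b k * c k * (c k * hJ a b k) with hT
  have hge : lam a b (m + 1) * wI a b (fun x => P.eval x ^ 2) ≤ T := by
    rw [hP2, Finset.mul_sum]
    refine Finset.sum_le_sum fun k _ => ?_
    have hh := (hJ_pos ha hb k).le
    rcases Nat.lt_or_ge k (m + 1) with hk | hk
    · have h0 := h (Jp a b k) (by rw [Jp_natDegree ha hb]; omega)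
      rw [coeff_mul_hJ ha hb] at h0
      have h0' : c k = 0 := (mul_eq_zero.1 h0).resolve_right (hJ_pos ha hb k).ne'
      simp [h0']
    · have hlm := (lam_mono ha hb).monotone hk
      have : 0 ≤ c k * (c k * hJ a b k) := by nlinarith [mul_self_nonneg (c k), mul_nonneg (mul_self_nonneg (c k)) hh]
      nlinarith
  have hTle : T ≤ wI (a + 1) (b + 1) (fun x => F' x ^ 2) := by
    have h0 : 0 ≤ wI (a + 1) (b + 1) (fun x => (F' x - P.derivative.eval x) ^ 2) :=
      wI_nonneg _ _ fun x => sq_nonneg _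
    have e : (fun x => (F' x - P.derivative.eval x) ^ 2) = fun x =>
      (F' x ^ 2 + P.derivative.eval x * P.derivative.eval x) -
        2 * (F' x * P.derivative.eval x) := by ext x; ring
    rw [e, wI_sub ha1 hb1 (by fun_prop) (by fun_prop), wI_add ha1 hb1 (by fun_prop) (by fun_prop),
      wI_smul, hFP', hPP'] at h0
    linarith
  have hε' : lam a b (m + 1) * wI a b (fun x => (F x - P.eval x) ^ 2) ≤ ε := by
    have h5 : wI a b (fun x => (F x - P.eval x) ^ 2) ≤ ε / (lam a b (m + 1) + 1) := by linarith
    calc _ ≤ lam a b (m + 1) * (ε / (lam a b (m + 1) + 1)) := mul_le_mul_of_nonneg_left h5 hl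
      _ ≤ ε := by
        rw [mul_div_assoc', div_le_iff₀ (by positivity)]
        nlinarith
  rw [h2, mul_add]
  linarith

/-- Derivatives of orthogonal remainders are orthogonal remainders. -/
lemma perp_deriv {a b : ℝ} (ha : -1 < a) (hb : -1 < b) {F F' : ℝ → ℝ}
    (hF : ∀ x, HasDerivAt F (F' x) x) (hF' : Continuous F') {m : ℕ} (h : Perp a b (m + 1) F) :
    Perp (a + 1) (b + 1) m F' := by
  intro q hq
  obtain ⟨Q, hQ, hQd⟩ : ∃ Q : Polynomial ℝ, Q.derivative = q ∧ Q.natDegree ≤ m + 1 := by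
    refine ⟨∑ i ∈ Finset.range (m + 1), Polynomial.monomial (i + 1) (q.coeff i / (i + 1)), ?_, ?_⟩
    · rw [Polynomial.derivative_sum]
      conv_rhs => rw [q.as_sum_range' (m + 1) (by omega)]
      refine Finset.sum_congr rfl fun i _ => ?_
      rw [Polynomial.derivative_monomial]
      have : ((i : ℝ) + 1) ≠ 0 := by positivity
      simp [this]
    · refine Polynomial.natDegree_sum_le_of_forall_le _ _ fun i hi => ?_
      refine (Polynomial.natDegree_monomial_le _).trans ?_
      have := Finset.mem_range.1 hi
      omega
  have := ibp ha hb hF hF' Q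
  rw [hQ] at this
  rw [this]
  exact h _ ((Lop_natDegree a b Q).trans hQd)

/-! ### The main estimate -/

lemma LpW_two (a b : ℝ) (g : ℝ → ℝ) : LpW a b 2 g = Real.sqrt (wI a b (fun x => g x ^ 2)) := by
  unfold LpW wI
  rw [if_neg (by simp), Real.sqrt_eq_rpow]
  simp

lemma lam_lower {a b : ℝ} (ha : -1 < a) (hb : -1 < b) {n r k : ℕ} (hk : k < r) (hn : r ≤ n) :
    (n : ℝ) ^ 2 / (r + 1) ≤ lam (a + k) (b + k) (n - k + 1) := by
  obtain ⟨m, rfl⟩ := Nat.exists_eq_add_of_le (by omega : k ≤ n)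
  rw [Nat.add_sub_cancel_left]
  have hkr : (k : ℝ) ≤ r := by exact_mod_cast hk.le
  have hk0 : (0 : ℝ) ≤ k := Nat.cast_nonneg k
  have hm0 : (0 : ℝ) ≤ m := Nat.cast_nonneg m
  unfold lam
  push_cast
  rw [div_le_iff₀ (by positivity)]
  have h1 : (m + k : ℝ) ≤ (m + 1) * (r + 1) := by nlinarith
  have h2 : (k + m : ℝ) ≤ m + 1 + (a + k) + (b + k) + 1 := by linarith
  calc (k + m : ℝ) ^ 2 = (m + k) * (k + m) := by ring
    _ ≤ ((m + 1) * (r + 1)) * (m + 1 + (a + k) + (b + k) + 1) :=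
        mul_le_mul h1 h2 (by positivity) (by positivity)
    _ = _ := by ring

lemma main_sq {α β : ℝ} (hα : -1 < α) (hβ : -1 < β) {r : ℕ} {f : ℝ → ℝ}
    (hf : ContDiff ℝ (r : ℕ∞) f) {n : ℕ} (hn : r ≤ n) {k : ℕ} (hk : k ≤ r)
    (q : Polynomial ℝ) (hq : q.natDegree ≤ n - r) :
    ((n : ℝ) ^ 2 / (r + 1)) ^ (r - k) * wI α β (fun x => (Real.sqrt (1 - x ^ 2) ^ k *
      (iteratedDeriv k f x - iteratedDeriv k (S α β n f) x)) ^ 2) ≤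
      wI α β (fun x => (iteratedDeriv r f x - q.eval x) ^ 2) := by
  set P := Sp α β n f with hP
  have hS : S α β n f = fun x => P.eval x := by ext x; rw [hP, Sp_eval]
  set F : ℝ → ℝ := fun x => f x - P.eval x with hFdef
  have hPc : ∀ m : WithTop ℕ∞, ContDiff ℝ m (fun x => P.eval x) := fun m => by
    simpa using P.contDiff_aeval (𝕜 := ℝ) m
  have hF : ContDiff ℝ (r : ℕ∞) F := hf.sub (hPc _)
  have hsub : ∀ j ≤ r, ∀ x, iteratedDeriv j F x =
      iteratedDeriv j f x - iteratedDeriv j (fun x => P.eval x) x := by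
    intro j hj x
    refine iteratedDeriv_fun_sub ?_ (hPc _).contDiffAt
    exact (hf.of_le (by exact_mod_cast hj)).contDiffAt
  have hcont : ∀ j ≤ r, Continuous (iteratedDeriv j F) := fun j hj =>
    hF.continuous_iteratedDeriv j (by exact_mod_cast hj)
  have hder : ∀ j < r, ∀ x, HasDerivAt (iteratedDeriv j F) (iteratedDeriv (j + 1) F x) x := by
    intro j hj x
    rw [iteratedDeriv_succ]
    exact ((hF.differentiable_iteratedDeriv j (by exact_mod_cast hj)) x).hasDerivAt
  have haj : ∀ j : ℕ, -1 < α + j := fun j => by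
    have : (0 : ℝ) ≤ j := Nat.cast_nonneg j
    linarith
  have hbj : ∀ j : ℕ, -1 < β + j := fun j => by
    have : (0 : ℝ) ≤ j := Nat.cast_nonneg j
    linarith
  have hperp : ∀ j ≤ r, Perp (α + j) (β + j) (n - j) (iteratedDeriv j F) := by
    intro j
    induction j with
    | zero =>
      intro _
      simpa using perp_Sp hα hβ hf.continuous n
    | succ j ih =>
      intro hj
      have h1 := ih (by omega)
      rw [show n - j = (n - (j + 1)) + 1 by omega] at h1
      have := perp_deriv (haj j) (hbj j) (hder j (by omega)) (hcont (j + 1) hj) h1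
      push_cast
      rwa [← add_assoc, ← add_assoc]
  have hstep : ∀ j < r, (n : ℝ) ^ 2 / (r + 1) *
      wI (α + j) (β + j) (fun x => iteratedDeriv j F x ^ 2) ≤
      wI (α + (j + 1 : ℕ)) (β + (j + 1 : ℕ)) (fun x => iteratedDeriv (j + 1) F x ^ 2) := by
    intro j hj
    have h1 := poincare (haj j) (hbj j) (hder j hj) (hcont (j + 1) hj) (hperp j hj.le)
    push_cast
    rw [← add_assoc, ← add_assoc]
    refine le_trans (mul_le_mul_of_nonneg_right (lam_lower hα hβ hj hn) ?_) h1
    exact wI_nonneg _ _ fun x => sq_nonneg _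
  have hchain : ∀ d j, j + d = r → ((n : ℝ) ^ 2 / (r + 1)) ^ d *
      wI (α + j) (β + j) (fun x => iteratedDeriv j F x ^ 2) ≤
      wI (α + r) (β + r) (fun x => iteratedDeriv r F x ^ 2) := by
    intro d
    induction d with
    | zero =>
      intro j hj
      obtain rfl : j = r := by omega
      simp
    | succ d ih =>
      intro j hj
      refine le_trans ?_ (ih (j + 1) (by omega))
      rw [pow_succ, mul_assoc]
      exact mul_le_mul_of_nonneg_left (hstep j (by omega)) (by positivity)
  have hL : wI α β (fun x => (Real.sqrt (1 - x ^ 2) ^ k *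
      (iteratedDeriv k f x - iteratedDeriv k (S α β n f) x)) ^ 2) =
      wI (α + k) (β + k) (fun x => iteratedDeriv k F x ^ 2) := by
    rw [wI_shift]
    refine setIntegral_congr_fun measurableSet_Ioo (fun x hx => ?_)
    have h0 : (0 : ℝ) ≤ 1 - x ^ 2 := by nlinarith [hx.1, hx.2]
    simp only
    rw [hsub k hk x, hS, mul_pow, ← pow_mul, mul_comm k 2, pow_mul, Real.sq_sqrt h0]
  rw [hL]
  refine (hchain (r - k) k (by omega)).trans ?_
  -- the final comparison
  set R : Polynomial ℝ := Polynomial.derivative^[r] P with hR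
  have hRe : ∀ x, iteratedDeriv r (fun x => P.eval x) x = R.eval x := by
    intro x
    have hgen : ∀ j : ℕ, iteratedDeriv j (fun x => P.eval x) =
        fun x => (Polynomial.derivative^[j] P).eval x := by
      intro j
      induction j with
      | zero => simp
      | succ j ih =>
        rw [iteratedDeriv_succ, ih, Function.iterate_succ_apply']
        ext y
        exact Polynomial.deriv _
    rw [hgen]
  have hRd : R.natDegree ≤ n - r := by
    rw [hR]
    refine (Polynomial.natDegree_iterate_derivative P r).trans ?_
    exact Nat.sub_le_sub_right (Sp_natDegree hα hβ n f) r
  have h1 := perp_min (haj r) (hbj r) (hcont r le_rfl) (hperp r le_rfl) (R - q)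
    ((Polynomial.natDegree_sub_le _ _).trans (max_le hRd hq))
  have e1 : (fun x => (iteratedDeriv r F x + (R - q).eval x) ^ 2) =
      fun x => (iteratedDeriv r f x - q.eval x) ^ 2 := by
    ext x
    rw [hsub r le_rfl x, hRe, Polynomial.eval_sub]
    ring
  rw [e1] at h1
  have h2 : 0 ≤ wI (α + r) (β + r) (fun x => (R - q).eval x ^ 2) :=
    wI_nonneg _ _ fun x => sq_nonneg _
  have hfc : Continuous (iteratedDeriv r f) := hf.continuous_iteratedDeriv r (by exact_mod_cast le_rfl)
  have h3 : wI (α + r) (β + r) (fun x => (iteratedDeriv r f x - q.eval x) ^ 2) ≤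
      wI α β (fun x => (iteratedDeriv r f x - q.eval x) ^ 2) := by
    rw [wI_shift]
    refine wI_mono hα hβ (by fun_prop) (by fun_prop) fun x hx => ?_
    have h0 : (0 : ℝ) ≤ 1 - x ^ 2 := by nlinarith [hx.1, hx.2]
    exact mul_le_of_le_one_left (sq_nonneg _) (pow_le_one₀ h0 (by nlinarith [sq_nonneg x]))
  linarith

theorem statement6 (α β : ℝ) (hα : -1 < α) (hβ : -1 < β) (r s : ℕ) (hsr : s ≤ r) :
    ∃ c : ℝ, 0 < c ∧ ∀ f : ℝ → ℝ, ContDiff ℝ (r : ℕ∞) f →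
      IntegrableOn (fun x => |iteratedDeriv r f x| ^ (2 : ℝ) * w α β x) (Ioo (-1 : ℝ) 1) →
      ∀ n : ℕ, r ≤ n → ∀ k : ℕ, k ≤ s →
        LpW α β 2 (fun x =>
            Real.sqrt (1 - x ^ 2) ^ k * (iteratedDeriv k f x - iteratedDeriv k (S α β n f) x))
          ≤ c * (n : ℝ) ^ ((k : ℝ) - (r : ℝ)) * E α β 2 (n - r) (iteratedDeriv r f) := by
  refine ⟨((r : ℝ) + 1) ^ r, by positivity, ?_⟩
  intro f hf _ n hn k hks
  have hk : k ≤ r := hks.trans hsr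
  have hNd : (0 : ℝ) < (n : ℝ) ^ (r - k) := by
    rcases Nat.eq_zero_or_pos n with h | h
    · have : r - k = 0 := by omega
      rw [this, pow_zero]; exact one_pos
    · positivity
  have hrp : (n : ℝ) ^ ((k : ℝ) - (r : ℝ)) = ((n : ℝ) ^ (r - k))⁻¹ := by
    rw [show (k : ℝ) - r = -((r - k : ℕ) : ℝ) by rw [Nat.cast_sub hk]; ring,
      Real.rpow_neg (Nat.cast_nonneg n), Real.rpow_natCast]
  rw [hrp]
  have hC : (0 : ℝ) < ((r : ℝ) + 1) ^ r * ((n : ℝ) ^ (r - k))⁻¹ := by positivity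
  rw [← div_le_iff₀' hC]
  unfold E
  refine le_csInf ⟨_, 0, by simp, rfl⟩ ?_
  rintro _ ⟨q, hq, rfl⟩
  rw [div_le_iff₀' hC, LpW_two, LpW_two]
  have key := main_sq hα hβ hf hn hk q hq
  refine Real.sqrt_le_iff.2 ⟨by positivity, ?_⟩
  rw [mul_pow, Real.sq_sqrt (wI_nonneg _ _ fun x => sq_nonneg _)]
  set A := wI α β (fun x => (Real.sqrt (1 - x ^ 2) ^ k *
      (iteratedDeriv k f x - iteratedDeriv k (S α β n f) x)) ^ 2)
  set B := wI α β (fun x => (iteratedDeriv r f x - q.eval x) ^ 2)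
  have hB : 0 ≤ B := wI_nonneg _ _ fun x => sq_nonneg _
  have hr1 : (1 : ℝ) ≤ (r : ℝ) + 1 := by
    have : (0 : ℝ) ≤ r := Nat.cast_nonneg r
    linarith
  have h1 : ((r : ℝ) + 1) ^ (r - k) ≤ (((r : ℝ) + 1) ^ r) ^ 2 := by
    rw [← pow_mul]
    exact pow_le_pow_right₀ hr1 (by omega)
  rw [div_pow, ← pow_mul, mul_comm 2 (r - k), pow_mul, div_mul_eq_mul_div,
    div_le_iff₀ (by positivity)] at key
  rw [mul_pow, inv_pow, mul_assoc, mul_comm _ B, ← mul_assoc, ← div_eq_mul_inv,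
    le_div_iff₀ (by positivity)]
  nlinarith [mul_le_mul_of_nonneg_left h1 hB]

end JacobiApprox
end
end

section
/- Let α, β > -1, s ∈ ℕ, θ ∈ [-1,1], 1 ≤ p ≤ ∞, and let f ∈ W_p^s(w_{α,β}) (f ∈ C^s[-1,1] when p = ∞). Then the Fourier coefficients of f in the Sobolev orthogonal system satisfy: \hat{𝔣}_n^{α-s,β-s} = f^{(n)}(θ) for 0 ≤ n ≤ s-1, and \hat{𝔣}_n^{α-s,β-s} = \widehat{(f^{(s)})}_{n-s}^{α,β} (the (n-s)-th Fourier–Jacobi coefficient of f^{(s)} with respect to w_{α,β}) for n ≥ s. -/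
open MeasureTheory Set ENNReal NNReal

noncomputable section

namespace JacobiApprox

/-- The iterated integral operator. -/
def II (θ : ℝ) (m : ℕ) (g : ℝ → ℝ) (x : ℝ) : ℝ :=
  ∫ t in θ..x, (x - t) ^ m / m.factorial * g t

lemma II_zero (θ : ℝ) (g : ℝ → ℝ) : II θ 0 g = fun x => ∫ t in θ..x, g t := by
  funext x; simp [II]

lemma deriv_II_zero (θ : ℝ) (g : ℝ → ℝ) (hg : Continuous g) : deriv (II θ 0 g) = g := by
  rw [II_zero]
  funext x
  exact Continuous.deriv_integral g hg θ x

lemma II_cont (θ : ℝ) (g : ℝ → ℝ) (hg : Continuous g) : Continuous (II θ 0 g) := by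
  rw [II_zero]
  exact intervalIntegral.continuous_primitive (fun a b => hg.intervalIntegrable a b) θ

lemma II_succ (θ : ℝ) (m : ℕ) (g : ℝ → ℝ) (hg : Continuous g) :
    II θ (m + 1) g = II θ m (II θ 0 g) := by
  funext x
  have h1 : ∀ t ∈ uIcc θ x, HasDerivAt (fun t => (x - t) ^ (m + 1) / (m + 1).factorial)
      (-((x - t) ^ m / m.factorial)) t := by
    intro t _
    have := (((hasDerivAt_id t).const_sub x).pow (m + 1)).div_const ((m + 1).factorial : ℝ)
    refine this.congr_deriv ?_
    have h0 : (m.factorial : ℝ) ≠ 0 := by positivity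
    have h2 : (m : ℝ) + 1 ≠ 0 := by positivity
    simp [Nat.factorial_succ]
    field_simp
  have h2 : ∀ t ∈ uIcc θ x, HasDerivAt (II θ 0 g) (g t) t := by
    intro t _
    rw [II_zero]
    exact intervalIntegral.integral_hasDerivAt_right (hg.intervalIntegrable _ _)
      (hg.stronglyMeasurableAtFilter _ _) hg.continuousAt
  have := intervalIntegral.integral_mul_deriv_eq_deriv_mul h1 h2
    (Continuous.intervalIntegrable (by fun_prop) _ _) (hg.intervalIntegrable _ _)
  unfold II at this ⊢
  rw [this]
  simp

lemma deriv_II_succ (θ : ℝ) (m : ℕ) : ∀ (g : ℝ → ℝ), Continuous g →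
    deriv (II θ (m + 1) g) = II θ m g := by
  induction m with
  | zero =>
    intro g hg
    rw [II_succ θ 0 g hg, deriv_II_zero _ _ (II_cont θ g hg)]
  | succ k ih =>
    intro g hg
    rw [II_succ θ (k + 1) g hg, ih _ (II_cont θ g hg), II_succ θ k g hg]

lemma iter_II (θ : ℝ) (g : ℝ → ℝ) (hg : Continuous g) (m : ℕ) :
    iteratedDeriv (m + 1) (II θ m g) = g := by
  induction m with
  | zero => simp [iteratedDeriv_one, deriv_II_zero θ g hg]
  | succ k ih => rw [iteratedDeriv_succ', deriv_II_succ θ k g hg, ih]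

lemma iter_II_at (θ : ℝ) (g : ℝ → ℝ) (hg : Continuous g) (m : ℕ) :
    ∀ k ≤ m, iteratedDeriv k (II θ m g) θ = 0 := by
  induction m with
  | zero => intro k hk; obtain rfl : k = 0 := by omega
            simp [II]
  | succ j ih =>
    intro k hk
    cases k with
    | zero => simp [II]
    | succ k => rw [iteratedDeriv_succ', deriv_II_succ θ j g hg]; exact ih k (by omega)

lemma J_cont (α β : ℝ) (n : ℕ) : Continuous (J α β n) := by
  unfold J JP
  fun_prop

lemma iter_pow (θ : ℝ) (n : ℕ) : ∀ k, iteratedDeriv k (fun x : ℝ => (x - θ) ^ n / n.factorial) =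
    if k ≤ n then (fun x : ℝ => (x - θ) ^ (n - k) / (n - k).factorial) else fun _ => 0 := by
  induction n with
  | zero =>
    intro k
    cases k with
    | zero => simp
    | succ k =>
      funext x
      simp [iteratedDeriv_succ', iteratedDeriv_fun_const_zero]
  | succ n ih =>
    intro k
    cases k with
    | zero => simp
    | succ k =>
      have : deriv (fun x : ℝ => (x - θ) ^ (n + 1) / (n + 1).factorial) =
          fun x : ℝ => (x - θ) ^ n / n.factorial := by
        funext t
        have := (((hasDerivAt_id t).sub_const θ).pow (n + 1)).div_const ((n + 1).factorial : ℝ)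
        refine (this.congr_deriv ?_).deriv
        have h0 : (n.factorial : ℝ) ≠ 0 := by positivity
        have h2 : (n : ℝ) + 1 ≠ 0 := by positivity
        simp [Nat.factorial_succ]
        field_simp
      rw [iteratedDeriv_succ', this, ih k]
      simp

theorem statement12 (α β : ℝ) (hα : -1 < α) (hβ : -1 < β) (s : ℕ) (hs : 1 ≤ s)
    (θ : ℝ) (hθ : θ ∈ Icc (-1 : ℝ) 1) (lam : ℕ → ℝ) (hlam : ∀ k, k < s → 0 < lam k)
    (p : ℝ≥0∞) (hp : 1 ≤ p) (f : ℝ → ℝ) (hf : MemW α β p s f) :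
    (∀ n : ℕ, n < s → coeffS α β s θ lam n f = iteratedDeriv n f θ) ∧
    (∀ n : ℕ, s ≤ n → coeffS α β s θ lam n f = coeff α β (n - s) (iteratedDeriv s f)) := by
  constructor
  · intro n hn
    have hSJ : SJ α β s θ n = fun x : ℝ => (x - θ) ^ n / n.factorial := by
      funext x; simp [SJ, hn]
    have hS : iteratedDeriv s (SJ α β s θ n) = fun _ => 0 := by
      rw [hSJ, iter_pow, if_neg (by omega)]
    have hK : ∀ k, iteratedDeriv k (SJ α β s θ n) θ = if k = n then 1 else 0 := by
      intro k
      rw [hSJ, iter_pow]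
      split_ifs with h1 h2 h2
      · subst h2; simp
      · have : n - k ≠ 0 := by omega
        simp [this]
      · omega
      · rfl
    have key : ∀ g, ipS α β s θ lam g (SJ α β s θ n) = lam n * iteratedDeriv n g θ := by
      intro g
      simp [ipS, ip, hS, hK, hn]
    have hl := (hlam n hn).ne'
    unfold coeffS
    rw [key, key, hK, if_pos rfl]
    field_simp
  · intro n hn
    have hSJ : SJ α β s θ n = II θ (s - 1) (J α β (n - s)) := by
      funext x; simp [SJ, II, hn]
    have hS : iteratedDeriv s (SJ α β s θ n) = J α β (n - s) := by
      have := iter_II θ _ (J_cont α β (n - s)) (s - 1)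
      rw [Nat.sub_add_cancel hs] at this
      rw [hSJ, this]
    have key : ∀ g, ipS α β s θ lam g (SJ α β s θ n) =
        ip α β (iteratedDeriv s g) (J α β (n - s)) := by
      intro g
      unfold ipS
      rw [hS, Finset.sum_eq_zero, add_zero]
      intro k hk
      rw [hSJ, iter_II_at θ _ (J_cont α β (n - s)) (s - 1) k
        (by have := Finset.mem_range.1 hk; omega), mul_zero]
    unfold coeffS coeff hJ
    rw [key, key, hS]

end JacobiApprox
end
end
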